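/- arXiv:1207.6128 — 3 statements merged into one kernel-verified Lean document; each statement's English description precedes it below -/
import Mathlib

section
/- Let P ⊆ ℝⁿ be a convex body containing 0 in its interior, and for every convex φ : ℝⁿ → ℝ with φ − φ_P bounded define 𝒢(φ) := −(1/vol(P)) ∫_P φ*(p) dp + log ∫_{ℝⁿ} e^{−φ(x)} dx. Then 𝒢 is bounded from above on the set of all such φ if and only if 0 is the barycenter of P, i.e. ∫_P p dp = 0 as a vector in ℝⁿ. -/
open scoped InnerProductSpace
open MeasureTheory

/-- The support function `φ_P(x) = sup_{p ∈ P} ⟨x, p⟫` of a set `P`. -/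
noncomputable def suppFn {n : ℕ} (P : Set (EuclideanSpace ℝ (Fin n)))
    (x : EuclideanSpace ℝ (Fin n)) : ℝ :=
  ⨆ p : P, ⟪x, (p : EuclideanSpace ℝ (Fin n))⟫_ℝ

/-- The (real-valued) Legendre transform `φ*(p) = sup_x (⟨p, x⟩ - φ(x))`. -/
noncomputable def legendre {n : ℕ} (φ : EuclideanSpace ℝ (Fin n) → ℝ)
    (p : EuclideanSpace ℝ (Fin n)) : ℝ :=
  ⨆ x, (⟪p, x⟫_ℝ - φ x)

/-- The Legendre transform with values in `ℝ ∪ {+∞}` (as a sup of real numbers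
over a nonempty index it never takes the value `-∞`). -/
noncomputable def legendreE {n : ℕ} (φ : EuclideanSpace ℝ (Fin n) → ℝ)
    (p : EuclideanSpace ℝ (Fin n)) : EReal :=
  ⨆ x, ((⟪p, x⟫_ℝ - φ x : ℝ) : EReal)

/-- The Moser–Trudinger type functional
`𝒢(φ) := -(1/vol P) ∫_P φ* dp + log ∫ e^{-φ} dx`. -/
noncomputable def GFun {n : ℕ} (P : Set (EuclideanSpace ℝ (Fin n)))
    (φ : EuclideanSpace ℝ (Fin n) → ℝ) : ℝ :=
  -((volume P).toReal)⁻¹ * (∫ p in P, legendre φ p) +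
    Real.log (∫ x, Real.exp (-φ x))

section helpers
variable {n : ℕ}

lemma supp_bdd {P : Set (EuclideanSpace ℝ (Fin n))} (hP : IsCompact P)
    (x : EuclideanSpace ℝ (Fin n)) :
    BddAbove (Set.range fun p : P => ⟪x, (p : EuclideanSpace ℝ (Fin n))⟫_ℝ) := by
  have h := hP.bddAbove_image (f := fun p => ⟪x, p⟫_ℝ) (by fun_prop)
  rw [Set.image_eq_range] at h
  exact h

lemma le_supp {P : Set (EuclideanSpace ℝ (Fin n))} (hP : IsCompact P)
    (x p : EuclideanSpace ℝ (Fin n)) (hp : p ∈ P) : ⟪x, p⟫_ℝ ≤ suppFn P x :=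
  le_ciSup (supp_bdd hP x) (⟨p, hp⟩ : P)

lemma supp_le {P : Set (EuclideanSpace ℝ (Fin n))} (hne : P.Nonempty)
    (x : EuclideanSpace ℝ (Fin n)) (c : ℝ) (h : ∀ p ∈ P, ⟪x, p⟫_ℝ ≤ c) : suppFn P x ≤ c := by
  have : Nonempty P := hne.to_subtype
  exact ciSup_le fun p => h p p.2

lemma supp_add {P : Set (EuclideanSpace ℝ (Fin n))} (hP : IsCompact P) (hne : P.Nonempty)
    (x y : EuclideanSpace ℝ (Fin n)) : suppFn P (x + y) ≤ suppFn P x + suppFn P y := by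
  apply supp_le hne
  intro p hp
  rw [inner_add_left]
  exact add_le_add (le_supp hP x p hp) (le_supp hP y p hp)

lemma supp_smul {P : Set (EuclideanSpace ℝ (Fin n))} (hP : IsCompact P) (hne : P.Nonempty)
    (t : ℝ) (ht : 0 ≤ t) (x : EuclideanSpace ℝ (Fin n)) :
    suppFn P (t • x) ≤ t * suppFn P x := by
  apply supp_le hne
  intro p hp
  rw [real_inner_smul_left]
  exact mul_le_mul_of_nonneg_left (le_supp hP x p hp) ht

lemma supp_zero {P : Set (EuclideanSpace ℝ (Fin n))} (hP : IsCompact P) (hne : P.Nonempty) :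
    suppFn P 0 = 0 := by
  apply le_antisymm
  · apply supp_le hne
    intro p hp
    simp
  · obtain ⟨p, hp⟩ := hne
    simpa using le_supp hP 0 p hp

lemma leg_bdd {P : Set (EuclideanSpace ℝ (Fin n))} (hP : IsCompact P)
    {φ : EuclideanSpace ℝ (Fin n) → ℝ} {M : ℝ} (hM : ∀ x, |φ x - suppFn P x| ≤ M)
    (p : EuclideanSpace ℝ (Fin n)) (hp : p ∈ P) (x : EuclideanSpace ℝ (Fin n)) :
    ⟪p, x⟫_ℝ - φ x ≤ M := by
  have h1 := (abs_le.1 (hM x)).1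
  have h2 := le_supp hP x p hp
  rw [real_inner_comm] at h2
  linarith

lemma le_leg {P : Set (EuclideanSpace ℝ (Fin n))} (hP : IsCompact P)
    {φ : EuclideanSpace ℝ (Fin n) → ℝ} {M : ℝ} (hM : ∀ x, |φ x - suppFn P x| ≤ M)
    (p : EuclideanSpace ℝ (Fin n)) (hp : p ∈ P) (x : EuclideanSpace ℝ (Fin n)) :
    ⟪p, x⟫_ℝ - φ x ≤ legendre φ p := by
  refine le_ciSup (f := fun x => ⟪p, x⟫_ℝ - φ x) ⟨M, ?_⟩ x
  rintro _ ⟨y, rfl⟩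
  exact leg_bdd hP hM p hp y

lemma leg_le {P : Set (EuclideanSpace ℝ (Fin n))} (hP : IsCompact P)
    {φ : EuclideanSpace ℝ (Fin n) → ℝ} {M : ℝ} (hM : ∀ x, |φ x - suppFn P x| ≤ M)
    (p : EuclideanSpace ℝ (Fin n)) (hp : p ∈ P) :
    legendre φ p ≤ M := ciSup_le fun x => leg_bdd hP hM p hp x

lemma leg_int {P : Set (EuclideanSpace ℝ (Fin n))} (hP : IsCompact P)
    {φ : EuclideanSpace ℝ (Fin n) → ℝ} {M : ℝ} (hM : ∀ x, |φ x - suppFn P x| ≤ M) :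
    IntegrableOn (legendre φ) P := by
  have hm : AEMeasurable (legendre φ) (volume.restrict P) := by
    apply aemeasurable_restrict_of_measurable_subtype hP.measurableSet
    apply LowerSemicontinuous.measurable
    unfold legendre
    apply lowerSemicontinuous_ciSup
    · rintro ⟨p, hp⟩
      refine ⟨M, ?_⟩
      rintro _ ⟨y, rfl⟩
      exact leg_bdd hP hM p hp y
    · intro x
      apply Continuous.lowerSemicontinuous
      fun_prop
  refine IntegrableOn.of_bound hP.measure_lt_top hm.aestronglyMeasurable (|M| + |φ 0|) ?_
  refine ae_restrict_of_forall_mem hP.measurableSet fun p hp => ?_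
  rw [Real.norm_eq_abs, abs_le]
  have h1 := leg_le hP hM p hp
  have h2 := le_leg hP hM p hp 0
  simp only [inner_zero_right] at h2
  have := le_abs_self M
  have := le_abs_self (φ 0)
  have := abs_nonneg M
  have := abs_nonneg (φ 0)
  constructor <;> linarith

lemma exp_norm_int : Integrable (fun x : EuclideanSpace ℝ (Fin n) => Real.exp (-‖x‖)) := by
  have h := integrable_one_add_norm (E := EuclideanSpace ℝ (Fin n)) (μ := volume)
    (r := ((n + 1 : ℕ) : ℝ)) (by simp)
  refine (h.const_mul (Real.exp 1 * (n + 1).factorial)).mono'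
    (by fun_prop) (Filter.Eventually.of_forall fun x => ?_)
  rw [Real.norm_eq_abs, abs_of_pos (Real.exp_pos _)]
  have h0 : (0 : ℝ) < 1 + ‖x‖ := by positivity
  rw [Real.rpow_neg h0.le, Real.rpow_natCast]
  have h1 := Real.pow_div_factorial_le_exp (1 + ‖x‖) h0.le (n + 1)
  have hf : (0 : ℝ) < (n + 1).factorial := by positivity
  rw [div_le_iff₀ hf, Real.exp_add] at h1
  have h2 : Real.exp (-‖x‖) * Real.exp ‖x‖ = 1 := by rw [← Real.exp_add]; simp
  rw [← div_eq_mul_inv, le_div_iff₀ (by positivity)]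
  calc _ ≤ Real.exp (-‖x‖) * (Real.exp 1 * Real.exp ‖x‖ * (n + 1).factorial) := by gcongr
    _ = (Real.exp (-‖x‖) * Real.exp ‖x‖) * (Real.exp 1 * (n + 1).factorial) := by ring
    _ = _ := by rw [h2, one_mul]

/-- lower bound for the mean of the positive part of a linear form -/
lemma pos_part_bound {P : Set (EuclideanSpace ℝ (Fin n))} (hP : IsCompact P)
    (h0 : (0 : EuclideanSpace ℝ (Fin n)) ∈ interior P) :
    ∃ c : ℝ, 0 < c ∧ ∀ y : EuclideanSpace ℝ (Fin n),
      c * ‖y‖ ≤ ∫ p in P, max ⟪p, y⟫_ℝ 0 := by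
  obtain ⟨r, hr, hball⟩ := Metric.isOpen_iff.1 isOpen_interior 0 h0
  have hball' : Metric.ball 0 r ⊆ P := hball.trans interior_subset
  set v := (volume (Metric.ball (0 : EuclideanSpace ℝ (Fin n)) (r / 4))).toReal with hv
  have hvpos : 0 < v := ENNReal.toReal_pos (Metric.measure_ball_pos _ _ (by positivity)).ne'
    measure_ball_lt_top.ne
  refine ⟨r / 4 * v, by positivity, fun y => ?_⟩
  by_cases hy : y = 0
  · simp [hy]
  have hy' : 0 < ‖y‖ := norm_pos_iff.2 hy
  set u := (r / 2 / ‖y‖) • y with hu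
  have hun : ‖u‖ = r / 2 := by
    rw [hu, norm_smul, Real.norm_eq_abs, abs_of_pos (by positivity)]
    field_simp
  have hsub : Metric.ball u (r / 4) ⊆ P := by
    intro p hp
    apply hball'
    rw [mem_ball_zero_iff]
    rw [mem_ball_iff_norm] at hp
    have := norm_add_le (p - u) u
    rw [sub_add_cancel] at this
    linarith
  have hint : IntegrableOn (fun p : EuclideanSpace ℝ (Fin n) => max ⟪p, y⟫_ℝ 0) P :=
    ContinuousOn.integrableOn_compact hP (by fun_prop)
  have hvol : volume.real (Metric.ball u (r / 4)) = v := by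
    rw [hv, Measure.real, Measure.addHaar_ball_center]
  calc r / 4 * v * ‖y‖ = ∫ p in Metric.ball u (r / 4), r / 4 * ‖y‖ := by
        rw [setIntegral_const, hvol, smul_eq_mul]; ring
    _ ≤ ∫ p in Metric.ball u (r / 4), max ⟪p, y⟫_ℝ 0 := by
        refine setIntegral_mono_on (integrableOn_const measure_ball_lt_top.ne)
          (hint.mono_set hsub) measurableSet_ball fun p hp => ?_
        apply le_max_of_le_left
        rw [mem_ball_iff_norm] at hp
        have e : ⟪p, y⟫_ℝ = ⟪p - u, y⟫_ℝ + ⟪u, y⟫_ℝ := by rw [← inner_add_left, sub_add_cancel]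
        have e2 : ⟪u, y⟫_ℝ = r / 2 * ‖y‖ := by
          rw [hu, real_inner_smul_left, real_inner_self_eq_norm_sq]
          field_simp
        have e3 := (abs_le.1 (abs_real_inner_le_norm (p - u) y)).1
        have e4 : ‖p - u‖ * ‖y‖ ≤ r / 4 * ‖y‖ := by gcongr
        rw [e, e2]
        linarith
    _ ≤ _ := setIntegral_mono_set hint (Filter.Eventually.of_forall fun p => le_max_right _ _)
        hsub.eventuallyLE

lemma dir1 {P : Set (EuclideanSpace ℝ (Fin n))}
    (hP : IsCompact P)
    (h0 : (0 : EuclideanSpace ℝ (Fin n)) ∈ interior P) (C : ℝ)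
    (hC : ∀ φ : EuclideanSpace ℝ (Fin n) → ℝ,
        ConvexOn ℝ Set.univ φ → (∃ M : ℝ, ∀ x, |φ x - suppFn P x| ≤ M) →
        GFun P φ ≤ C) : (∫ p in P, p) = (0 : EuclideanSpace ℝ (Fin n)) := by
  have hne : P.Nonempty := ⟨0, interior_subset h0⟩
  have hvpos : 0 < (volume P).toReal := ENNReal.toReal_pos
    (Measure.measure_pos_of_nonempty_interior volume ⟨0, h0⟩).ne' hP.measure_lt_top.ne
  set b := ∫ p in P, p with hb
  by_contra hb0
  set V := (volume P).toReal with hV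
  set L := Real.log (∫ x, Real.exp (-suppFn P x)) with hL
  have hid : IntegrableOn (fun p : EuclideanSpace ℝ (Fin n) => p) P :=
    ContinuousOn.integrableOn_compact hP (by fun_prop)
  have key : ∀ a : EuclideanSpace ℝ (Fin n), -V⁻¹ * ⟪a, b⟫_ℝ + L ≤ C := by
    intro a
    have hM : ∀ x, |suppFn P (x - a) - suppFn P x| ≤ |suppFn P a| + |suppFn P (-a)| := by
      intro x
      have h1 := supp_add hP hne (x - a) a
      have h2 := supp_add hP hne x (-a)
      rw [sub_add_cancel] at h1
      rw [← sub_eq_add_neg] at h2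
      have := le_abs_self (suppFn P a)
      have := le_abs_self (suppFn P (-a))
      have := abs_nonneg (suppFn P a)
      have := abs_nonneg (suppFn P (-a))
      rw [abs_le]
      constructor <;> linarith
    have h := hC (fun x => suppFn P (x - a)) ?_ ⟨_, hM⟩
    · have hleg : ∀ p ∈ P, legendre (fun x => suppFn P (x - a)) p = ⟪a, p⟫_ℝ := by
        intro p hp
        apply le_antisymm
        · refine ciSup_le fun x => ?_
          have := le_supp hP (x - a) p hp
          rw [inner_sub_left, real_inner_comm] at this
          linarith
        · have := le_leg hP hM p hp a
          simp only [sub_self, supp_zero hP hne, sub_zero] at this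
          rwa [real_inner_comm] at this
      unfold GFun at h
      rw [setIntegral_congr_fun hP.measurableSet hleg, integral_inner hid,
        integral_sub_right_eq_self (fun x => Real.exp (-suppFn P x)) a] at h
      exact h
    · refine ⟨convex_univ, fun x _ y _ s t hs ht hst => ?_⟩
      have e : s • x + t • y - a = s • (x - a) + t • (y - a) := by
        have : a = s • a + t • a := by rw [← add_smul, hst, one_smul]
        nth_rw 1 [this]
        simp only [smul_sub]; abel
      simp only [smul_eq_mul]
      rw [e]
      exact (supp_add hP hne _ _).trans
        (add_le_add (supp_smul hP hne s hs _) (supp_smul hP hne t ht _))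
  have hbb : 0 < ⟪b, b⟫_ℝ := real_inner_self_pos.2 hb0
  have h := key ((-(V * (C - L + 1) / ⟪b, b⟫_ℝ)) • b)
  rw [real_inner_smul_left] at h
  have : -V⁻¹ * (-(V * (C - L + 1) / ⟪b, b⟫_ℝ) * ⟪b, b⟫_ℝ) = C - L + 1 := by
    field_simp
  linarith

lemma dir2 {P : Set (EuclideanSpace ℝ (Fin n))}
    (hP : IsCompact P)
    (h0 : (0 : EuclideanSpace ℝ (Fin n)) ∈ interior P)
    (hbar : (∫ p in P, p) = (0 : EuclideanSpace ℝ (Fin n))) :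
    ∃ C : ℝ, ∀ φ : EuclideanSpace ℝ (Fin n) → ℝ,
        ConvexOn ℝ Set.univ φ → (∃ M : ℝ, ∀ x, |φ x - suppFn P x| ≤ M) →
        GFun P φ ≤ C := by
  have h0P := interior_subset h0
  have hvpos : 0 < (volume P).toReal := ENNReal.toReal_pos
    (Measure.measure_pos_of_nonempty_interior volume ⟨0, h0⟩).ne' hP.measure_lt_top.ne
  obtain ⟨c', hc', hpos⟩ := pos_part_bound hP h0
  set V := (volume P).toReal with hV
  set c := V⁻¹ * c' with hcdef
  have hc : 0 < c := by positivity
  set A := ∫ x : EuclideanSpace ℝ (Fin n), Real.exp (-‖x‖) with hA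
  have hApos : 0 < A := integral_exp_pos exp_norm_int
  refine ⟨4 + n * Real.log ((n + 1) / c) + Real.log A, ?_⟩
  rintro φ hφ ⟨M, hM⟩
  have hcont : Continuous φ := by
    rw [← continuousOn_univ]
    exact hφ.continuousOn isOpen_univ
  have hbd : BddBelow (Set.range φ) := by
    refine ⟨-M, ?_⟩
    rintro _ ⟨x, rfl⟩
    have := leg_bdd hP hM 0 h0P x
    simp only [inner_zero_left] at this
    linarith
  set μ := ⨅ x, φ x with hμ
  have hμle : ∀ x, μ ≤ φ x := fun x => ciInf_le hbd x
  obtain ⟨a, ha⟩ : ∃ a, φ a < μ + 1 := exists_lt_of_ciInf_lt (by linarith)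
  set I := V⁻¹ * ∫ p in P, legendre φ p with hI
  have hlin : ∫ p in P, ⟪a, p⟫_ℝ = 0 := by
    rw [integral_inner (ContinuousOn.integrableOn_compact hP (by fun_prop)), hbar,
      inner_zero_right]
  have hmean : ∀ x, φ x ≤ μ + 2 → c * ‖x - a‖ - μ - 2 ≤ I := by
    intro x hx
    have hi1 : IntegrableOn (fun p : EuclideanSpace ℝ (Fin n) => ⟪a, p⟫_ℝ) P :=
      ContinuousOn.integrableOn_compact hP (by fun_prop)
    have hi2 : IntegrableOn (fun p : EuclideanSpace ℝ (Fin n) => max ⟪p, x - a⟫_ℝ 0) P :=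
      ContinuousOn.integrableOn_compact hP (by fun_prop)
    have hi3 : IntegrableOn (fun _ : EuclideanSpace ℝ (Fin n) => - μ - 2) P :=
      integrableOn_const hP.measure_lt_top.ne
    have h1 : ∫ p in P, ((⟪a, p⟫_ℝ + max ⟪p, x - a⟫_ℝ 0) + (- μ - 2)) ≤
        ∫ p in P, legendre φ p := by
      refine setIntegral_mono_on ((hi1.add hi2).add hi3) (leg_int hP hM) hP.measurableSet
        fun p hp => ?_
      have e1 := le_leg hP hM p hp a
      have e2 := le_leg hP hM p hp x
      have e3 : ⟪p, x⟫_ℝ = ⟪p, a⟫_ℝ + ⟪p, x - a⟫_ℝ := by rw [← inner_add_right]; simp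
      have e4 : ⟪a, p⟫_ℝ = ⟪p, a⟫_ℝ := real_inner_comm _ _
      rcases max_choice ⟪p, x - a⟫_ℝ 0 with h | h <;> rw [h] <;> linarith
    have hi12 : IntegrableOn (fun p : EuclideanSpace ℝ (Fin n) =>
        ⟪a, p⟫_ℝ + max ⟪p, x - a⟫_ℝ 0) P := hi1.add hi2
    rw [integral_add hi12 hi3, integral_add hi1 hi2, hlin, setIntegral_const,
      smul_eq_mul, Measure.real, ← hV] at h1
    have h2 := hpos (x - a)
    have h3 : c' * ‖x - a‖ + V * (-μ - 2) ≤ ∫ p in P, legendre φ p := by linarith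
    have h4 := mul_le_mul_of_nonneg_left h3 (inv_pos.2 hvpos).le
    have h5 : V⁻¹ * (c' * ‖x - a‖ + V * (-μ - 2)) = c * ‖x - a‖ - μ - 2 := by
      rw [hcdef]; field_simp; ring
    rw [h5] at h4
    exact h4
  set R := (I + μ + 3) / c with hR
  have hRpos : 0 < R := by
    have := hmean a (by linarith)
    simp only [sub_self, norm_zero, mul_zero] at this
    apply div_pos _ hc
    linarith
  have hcR : c * R = I + μ + 3 := by rw [hR]; field_simp
  have hfar : ∀ x, R ≤ ‖x - a‖ → μ + 2 < φ x := by
    intro x hx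
    by_contra hcon
    have := hmean x (not_lt.1 hcon)
    have : c * R ≤ c * ‖x - a‖ := by gcongr
    linarith
  have hgrow : ∀ x, ‖x - a‖ / R - 1 ≤ φ x - μ := by
    intro x
    rcases le_total R ‖x - a‖ with hx | hx
    · have hxp : 0 < ‖x - a‖ := hRpos.trans_le hx
      set s := R / ‖x - a‖ with hs
      have hs0 : 0 < s := by positivity
      have hs1 : s ≤ 1 := (div_le_one hxp).2 hx
      have hconv := hφ.2 (Set.mem_univ a) (Set.mem_univ x) (sub_nonneg.2 hs1) hs0.le
        (by ring)
      have hy : R ≤ ‖((1 - s) • a + s • x) - a‖ := by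
        have : ((1 - s) • a + s • x) - a = s • (x - a) := by
          rw [sub_smul, smul_sub, one_smul]; abel
        rw [this, norm_smul, Real.norm_eq_abs, abs_of_pos hs0, hs]
        apply le_of_eq
        field_simp
      have h2 := hfar _ hy
      simp only [smul_eq_mul] at hconv
      have h3 : (1 - s) * (φ a - μ) ≤ 1 := by
        have := hμle a
        nlinarith
      have h4 : 1 ≤ s * (φ x - μ) := by nlinarith
      have h5 : ‖x - a‖ / R = s⁻¹ := by rw [hs, inv_div]
      have h6 : s⁻¹ ≤ φ x - μ := by
        rw [inv_le_iff_one_le_mul₀ hs0]; linarith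
      rw [h5]; linarith
    · have : ‖x - a‖ / R ≤ 1 := (div_le_one hRpos).2 hx
      have := hμle x
      linarith
  have hdomint : Integrable (fun x : EuclideanSpace ℝ (Fin n) =>
      Real.exp (1 - μ) * Real.exp (-‖R⁻¹ • (x - a)‖)) := by
    apply Integrable.const_mul
    have h1 := (exp_norm_int (n := n)).comp_smul (inv_pos.2 hRpos).ne'
    exact h1.comp_sub_right a
  have hdom : ∀ x, Real.exp (-φ x) ≤ Real.exp (1 - μ) * Real.exp (-‖R⁻¹ • (x - a)‖) := by
    intro x
    rw [← Real.exp_add, Real.exp_le_exp, norm_smul, Real.norm_eq_abs,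
      abs_of_pos (inv_pos.2 hRpos)]
    have := hgrow x
    rw [div_eq_inv_mul] at this
    linarith
  have hint : Integrable (fun x => Real.exp (-φ x)) := by
    refine hdomint.mono' (by fun_prop) (Filter.Eventually.of_forall fun x => ?_)
    rw [Real.norm_eq_abs, abs_of_pos (Real.exp_pos _)]
    exact hdom x
  have hle : ∫ x, Real.exp (-φ x) ≤ Real.exp (1 - μ) * (R ^ n * A) := by
    refine (integral_mono hint hdomint hdom).trans (le_of_eq ?_)
    rw [integral_const_mul,
      integral_sub_right_eq_self (fun x : EuclideanSpace ℝ (Fin n) => Real.exp (-‖R⁻¹ • x‖)) a,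
      Measure.integral_comp_inv_smul volume
        (fun x : EuclideanSpace ℝ (Fin n) => Real.exp (-‖x‖)) R]
    rw [abs_of_pos (by positivity)]
    simp [hA]
  have hlog : Real.log (∫ x, Real.exp (-φ x)) ≤ (1 - μ) + (n * Real.log R + Real.log A) := by
    refine (Real.log_le_log (integral_exp_pos hint) hle).trans (le_of_eq ?_)
    rw [Real.log_mul (by positivity) (by positivity), Real.log_mul (by positivity) (by positivity),
      Real.log_exp, Real.log_pow]
  have hlogR : n * Real.log R ≤ c * R + n * Real.log ((n + 1) / c) := by
    have hn : (0 : ℝ) < n + 1 := by positivity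
    have h1 : R = (c * R / (n + 1)) * ((n + 1) / c) := by field_simp
    have h2 : Real.log R ≤ c * R / (n + 1) + Real.log ((n + 1) / c) := by
      nth_rw 1 [h1]
      rw [Real.log_mul (by positivity) (by positivity)]
      have := Real.log_le_sub_one_of_pos (show 0 < c * R / (n + 1) by positivity)
      linarith
    have h3 : (n : ℝ) * (c * R / (n + 1)) ≤ c * R := by
      rw [← mul_div_assoc, div_le_iff₀ hn]
      have : 0 < c * R := by positivity
      nlinarith
    have h4 := mul_le_mul_of_nonneg_left h2 (Nat.cast_nonneg (α := ℝ) n)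
    rw [mul_add] at h4
    linarith
  have hG : GFun P φ = -I + Real.log (∫ x, Real.exp (-φ x)) := by
    unfold GFun
    rw [hI]; ring
  rw [hG]
  linarith

end helpers

/-- The functional `𝒢` is bounded above on the set of convex
functions `φ` with `φ - φ_P` bounded if and only if `0` is the barycenter of
`P`, i.e. `∫_P p dp = 0`. -/
theorem statement15 {n : ℕ} (P : Set (EuclideanSpace ℝ (Fin n)))
    (hPcomp : IsCompact P) (hPconv : Convex ℝ P)
    (h0 : (0 : EuclideanSpace ℝ (Fin n)) ∈ interior P) :
    (∃ C : ℝ, ∀ φ : EuclideanSpace ℝ (Fin n) → ℝ,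
        ConvexOn ℝ Set.univ φ → (∃ M : ℝ, ∀ x, |φ x - suppFn P x| ≤ M) →
        GFun P φ ≤ C) ↔
      (∫ p in P, p) = (0 : EuclideanSpace ℝ (Fin n)) := by
  constructor
  · rintro ⟨C, hC⟩
    exact dir1 hPcomp h0 C hC
  · exact dir2 hPcomp h0
end

section
/- Let P ⊆ ℝⁿ be a convex body containing 0 in its interior, with barycenter b := (∫_P p dp)/vol(P), and let r ∈ (0,1). For every convex φ : ℝⁿ → ℝ with φ − φ_P bounded define 𝒢_r(φ) := −(1/vol(P)) ∫_P φ*(p) dp + (1/r)·log ∫_{ℝⁿ} e^{−r·φ(x) − (1−r)·φ_P(x)} dx. Then 𝒢_r is bounded from above on the set of all such φ if and only if (1−r)·φ_P(x) + r·⟨b, x⟩ ≥ 0 for all x ∈ ℝⁿ. -/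
open scoped InnerProductSpace
open MeasureTheory

/-- The twisted Moser–Trudinger type functional
`𝒢_r(φ) := -(1/vol P) ∫_P φ* dp + (1/r) log ∫ e^{-rφ - (1-r)φ_P} dx`. -/
noncomputable def GrFun {n : ℕ} (P : Set (EuclideanSpace ℝ (Fin n))) (r : ℝ)
    (φ : EuclideanSpace ℝ (Fin n) → ℝ) : ℝ :=
  -((volume P).toReal)⁻¹ * (∫ p in P, legendre φ p) +
    r⁻¹ * Real.log (∫ x, Real.exp (-(r * φ x) - (1 - r) * suppFn P x))

section helpers

variable {n : ℕ} {P : Set (EuclideanSpace ℝ (Fin n))}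

lemma suppFn_bdd (hP : IsCompact P) (x : EuclideanSpace ℝ (Fin n)) :
    BddAbove (Set.range fun p : P => ⟪x, (p : EuclideanSpace ℝ (Fin n))⟫_ℝ) := by
  have h := (hP.image (f := fun p => ⟪x, p⟫_ℝ) (by fun_prop)).bddAbove
  rwa [Set.image_eq_range] at h

lemma le_suppFn (hP : IsCompact P) (x : EuclideanSpace ℝ (Fin n))
    {p : EuclideanSpace ℝ (Fin n)} (hp : p ∈ P) : ⟪x, p⟫_ℝ ≤ suppFn P x :=
  le_ciSup (suppFn_bdd hP x) ⟨p, hp⟩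

lemma suppFn_le (hne : P.Nonempty) (x : EuclideanSpace ℝ (Fin n)) {c : ℝ}
    (h : ∀ p ∈ P, ⟪x, p⟫_ℝ ≤ c) : suppFn P x ≤ c := by
  have : Nonempty P := hne.to_subtype
  exact ciSup_le fun p => h p p.2

lemma suppFn_add_le (hP : IsCompact P) (hne : P.Nonempty) (x y : EuclideanSpace ℝ (Fin n)) :
    suppFn P (x + y) ≤ suppFn P x + suppFn P y := by
  refine suppFn_le hne _ fun p hp => ?_
  rw [inner_add_left]
  exact add_le_add (le_suppFn hP x hp) (le_suppFn hP y hp)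

lemma suppFn_zero (hP : IsCompact P) (hne : P.Nonempty) : suppFn P 0 = 0 := by
  obtain ⟨p, hp⟩ := hne
  apply le_antisymm
  · exact suppFn_le ⟨p, hp⟩ _ fun q _ => by simp
  · simpa using le_suppFn hP 0 hp

lemma suppFn_smul_le (hP : IsCompact P) (hne : P.Nonempty) (x : EuclideanSpace ℝ (Fin n))
    {t : ℝ} (ht : 0 ≤ t) : suppFn P (t • x) ≤ t * suppFn P x := by
  refine suppFn_le hne _ fun p hp => ?_
  rw [real_inner_smul_left]
  exact mul_le_mul_of_nonneg_left (le_suppFn hP x hp) ht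

lemma suppFn_convex (hP : IsCompact P) (hne : P.Nonempty) :
    ConvexOn ℝ Set.univ (suppFn P) := by
  refine ⟨convex_univ, fun x _ y _ a b ha hb _ => ?_⟩
  exact (suppFn_add_le hP hne _ _).trans
    (add_le_add (suppFn_smul_le hP hne x ha) (suppFn_smul_le hP hne y hb))

lemma cont_of_convex {φ : EuclideanSpace ℝ (Fin n) → ℝ} (h : ConvexOn ℝ Set.univ φ) :
    Continuous φ := by
  have := h.continuousOn_interior
  rwa [interior_univ, continuousOn_univ] at this

lemma exists_dir (y : EuclideanSpace ℝ (Fin n)) {δ : ℝ} (hδ : 0 ≤ δ) :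
    ∃ q : EuclideanSpace ℝ (Fin n), ‖q‖ ≤ δ ∧ ⟪q, y⟫_ℝ = δ * ‖y‖ := by
  refine ⟨(δ / ‖y‖) • y, ?_, ?_⟩
  · rw [norm_smul, Real.norm_eq_abs, abs_of_nonneg (by positivity)]
    by_cases h : ‖y‖ = 0
    · simpa [h] using hδ
    · exact le_of_eq (by field_simp)
  · rw [real_inner_smul_left, real_inner_self_eq_norm_sq]
    by_cases h : ‖y‖ = 0
    · simp [h]
    · field_simp

lemma suppFn_ge_norm (hP : IsCompact P) {δ : ℝ} (hδ : 0 ≤ δ)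
    (hB : Metric.closedBall 0 δ ⊆ P) (x : EuclideanSpace ℝ (Fin n)) :
    δ * ‖x‖ ≤ suppFn P x := by
  obtain ⟨q, hq, hqx⟩ := exists_dir x hδ
  rw [← hqx, real_inner_comm]
  exact le_suppFn hP x (hB (by simpa using hq))

lemma integrable_exp_norm {c : ℝ} (hc : 0 < c) :
    Integrable (fun x : EuclideanSpace ℝ (Fin n) => Real.exp (-(c * ‖x‖))) := by
  have h1 : Integrable (fun x : EuclideanSpace ℝ (Fin n) => (1 + ‖x‖) ^ (-((n + 1 : ℕ) : ℝ))) := by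
    apply integrable_one_add_norm
    simp
  refine (h1.const_mul (Real.exp c * ((n + 1).factorial / c ^ (n + 1)))).mono'
    (by fun_prop) (Filter.Eventually.of_forall fun x => ?_)
  have hx : 0 < 1 + ‖x‖ := by positivity
  rw [Real.norm_eq_abs, abs_of_pos (Real.exp_pos _), Real.rpow_neg hx.le, Real.rpow_natCast]
  have h2 := Real.pow_div_factorial_le_exp (x := c * (1 + ‖x‖)) (by positivity) (n + 1)
  have h3 : Real.exp (-(c * ‖x‖)) = Real.exp c * (Real.exp (c * (1 + ‖x‖)))⁻¹ := by
    rw [← Real.exp_neg, ← Real.exp_add]; ring_nf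
  rw [h3, mul_assoc]
  refine mul_le_mul_of_nonneg_left ?_ (Real.exp_pos _).le
  refine (inv_anti₀ (by positivity) h2).trans (le_of_eq ?_)
  rw [mul_pow]
  field_simp

lemma integrable_Gr (hP : IsCompact P) {δ : ℝ} (hδ : 0 < δ)
    (hB : Metric.closedBall 0 δ ⊆ P) {r : ℝ} (hr : 0 < r)
    {φ : EuclideanSpace ℝ (Fin n) → ℝ} (hφ : ConvexOn ℝ Set.univ φ) {M : ℝ}
    (hM : ∀ x, |φ x - suppFn P x| ≤ M) :
    Integrable (fun x => Real.exp (-(r * φ x) - (1 - r) * suppFn P x)) := by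
  have hne : P.Nonempty := ⟨0, hB (by simp [hδ.le])⟩
  have c1 := cont_of_convex hφ
  have c2 := cont_of_convex (suppFn_convex hP hne)
  refine ((integrable_exp_norm (n := n) hδ).const_mul (Real.exp (r * M))).mono'
    (by fun_prop) (Filter.Eventually.of_forall fun x => ?_)
  rw [Real.norm_eq_abs, abs_of_pos (Real.exp_pos _), ← Real.exp_add, Real.exp_le_exp]
  have h1 := suppFn_ge_norm hP hδ.le hB x
  have h2 := (abs_le.1 (hM x)).1
  nlinarith

lemma integrableOn_id' (hP : IsCompact P) :
    IntegrableOn (fun p : EuclideanSpace ℝ (Fin n) => p) P :=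
  continuous_id.continuousOn.integrableOn_compact hP

lemma necessity (hP : IsCompact P) {δ : ℝ} (hδ : 0 < δ)
    (hB : Metric.closedBall 0 δ ⊆ P)
    {r : ℝ} (hr : r ∈ Set.Ioo (0 : ℝ) 1)
    (b : EuclideanSpace ℝ (Fin n))
    (hb : b = ((volume P).toReal)⁻¹ • (∫ p in P, p)) (C : ℝ)
    (hC : ∀ φ : EuclideanSpace ℝ (Fin n) → ℝ,
        ConvexOn ℝ Set.univ φ → (∃ M : ℝ, ∀ x, |φ x - suppFn P x| ≤ M) →
        GrFun P r φ ≤ C) (a : EuclideanSpace ℝ (Fin n)) :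
    -⟪b, a⟫_ℝ + r⁻¹ * (Real.log (∫ x, Real.exp (-(suppFn P x))) - (1 - r) * suppFn P a) ≤ C := by
  have hne : P.Nonempty := ⟨0, hB (by simp [hδ.le])⟩
  have hconv : ConvexOn ℝ Set.univ (fun x => suppFn P (x - a)) := by
    have := (suppFn_convex hP hne).translate_left (-a)
    simpa [Function.comp_def, sub_eq_add_neg, add_comm] using this
  have hM : ∀ x, |suppFn P (x - a) - suppFn P x| ≤ max (suppFn P a) (suppFn P (-a)) := by
    intro x
    have h1 := suppFn_add_le hP hne (x - a) a
    have h2 := suppFn_add_le hP hne x (-a)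
    rw [sub_add_cancel] at h1
    rw [← sub_eq_add_neg] at h2
    rw [abs_le]
    constructor
    · linarith [le_max_left (suppFn P a) (suppFn P (-a))]
    · linarith [le_max_right (suppFn P a) (suppFn P (-a))]
  refine le_trans ?_ (hC _ hconv ⟨_, hM⟩)
  unfold GrFun
  refine add_le_add (le_of_eq ?_) (mul_le_mul_of_nonneg_left ?_ (inv_nonneg.2 hr.1.le))
  · have h1 : ∫ p in P, legendre (fun x => suppFn P (x - a)) p = ∫ p in P, ⟪a, p⟫_ℝ := by
      refine setIntegral_congr_fun hP.measurableSet fun p hp => ?_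
      have hle : ∀ x, ⟪p, x⟫_ℝ - suppFn P (x - a) ≤ ⟪a, p⟫_ℝ := by
        intro x
        have := le_suppFn hP (x - a) hp
        rw [inner_sub_left, real_inner_comm p x] at this
        linarith
      apply le_antisymm
      · exact ciSup_le hle
      · refine le_trans (le_of_eq ?_) (le_ciSup (f := fun x => ⟪p, x⟫_ℝ - suppFn P (x - a))
          ⟨_, Set.forall_mem_range.2 hle⟩ a)
        simp [suppFn_zero hP hne, real_inner_comm]
    rw [h1, integral_inner (integrableOn_id' hP), hb, real_inner_smul_left, real_inner_comm]
    ring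
  · have e1 : ∫ x, Real.exp (-(suppFn P x)) = ∫ x, Real.exp (-(suppFn P (x - a))) :=
      (integral_sub_right_eq_self (fun x => Real.exp (-(suppFn P x))) a).symm
    have i0 : Integrable (fun x => Real.exp (-(suppFn P x))) := by
      have := integrable_Gr hP hδ hB one_pos (suppFn_convex hP hne) (M := 0) (by simp)
      simpa using this
    have i1 : Integrable (fun x => Real.exp (-(suppFn P (x - a)))) := i0.comp_sub_right a
    have pos : 0 < ∫ x, Real.exp (-(suppFn P x)) := integral_exp_pos i0
    have e2 : Real.log (∫ x, Real.exp (-(suppFn P x))) - (1 - r) * suppFn P a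
        = Real.log (∫ x, Real.exp (-((1 - r) * suppFn P a)) * Real.exp (-(suppFn P (x - a)))) := by
      rw [integral_const_mul, ← e1, Real.log_mul (Real.exp_pos _).ne' pos.ne', Real.log_exp]
      ring
    rw [e2]
    refine Real.log_le_log ?_ ?_
    · rw [integral_const_mul, ← e1]; exact mul_pos (Real.exp_pos _) pos
    · refine integral_mono (i1.const_mul _) (integrable_Gr hP hδ hB hr.1 hconv hM) fun x => ?_
      simp only
      rw [← Real.exp_add, Real.exp_le_exp]
      have h1 := suppFn_add_le hP hne (x - a) a
      rw [sub_add_cancel] at h1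
      nlinarith [hr.2]

lemma bary_ball (hP : IsCompact P) (hconv : Convex ℝ P) {ρ : ℝ} (hρ : 0 < ρ)
    (hB : Metric.closedBall 0 (2 * ρ) ⊆ P) (hV : 0 < (volume P).toReal)
    (b : EuclideanSpace ℝ (Fin n))
    (hb : b = ((volume P).toReal)⁻¹ • (∫ p in P, p)) :
    ∃ δ > 0, Metric.closedBall b δ ⊆ P := by
  have hsub : Metric.closedBall (0 : EuclideanSpace ℝ (Fin n)) ρ ⊆ P :=
    (Metric.closedBall_subset_closedBall (by linarith)).trans hB
  set m : ℝ := volume.real (Metric.closedBall (0 : EuclideanSpace ℝ (Fin n)) ρ) with hm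
  have hm0 : 0 < m :=
    ENNReal.toReal_pos (Metric.measure_closedBall_pos volume _ hρ).ne' measure_closedBall_lt_top.ne
  set V := (volume P).toReal with hVdef
  refine ⟨V⁻¹ * m * ρ, by positivity, fun y hy => ?_⟩
  have hPne0 : volume P ≠ 0 := fun h => by simp [hVdef, h] at hV
  set q : EuclideanSpace ℝ (Fin n) := (V⁻¹ * m)⁻¹ • (y - b) with hq
  have hqn : ‖q‖ ≤ ρ := by
    rw [hq, norm_smul, Real.norm_eq_abs, abs_of_pos (by positivity), inv_mul_le_iff₀ (by positivity)]
    simpa [dist_eq_norm] using hy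
  have hqi : IntegrableOn ((Metric.closedBall (0 : EuclideanSpace ℝ (Fin n)) ρ).indicator
      (fun _ => q)) P := by
    refine (integrable_indicator_iff Metric.isClosed_closedBall.measurableSet).2 ?_
    refine IntegrableOn.restrict ?_
    exact integrableOn_const measure_closedBall_lt_top.ne
  have key := hconv.set_average_mem (μ := volume) (t := P)
    (f := fun p => p + (Metric.closedBall (0 : EuclideanSpace ℝ (Fin n)) ρ).indicator
      (fun _ => q) p) hP.isClosed hPne0 hP.measure_lt_top.ne ?_ ?_
  · convert key using 1
    rw [setAverage_eq, integral_add (integrableOn_id' hP) hqi,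
      setIntegral_indicator Metric.isClosed_closedBall.measurableSet,
      Set.inter_eq_right.2 hsub, setIntegral_const, smul_add]
    change y = V⁻¹ • _ + V⁻¹ • (m • q)
    rw [← hb, hq, smul_smul, smul_smul, mul_inv_cancel₀ (by positivity)]
    simp
  · refine (ae_restrict_iff' hP.measurableSet).2 (Filter.Eventually.of_forall fun p hp => ?_)
    by_cases h : p ∈ Metric.closedBall (0 : EuclideanSpace ℝ (Fin n)) ρ
    · rw [Set.indicator_of_mem h]
      apply hB
      simp only [mem_closedBall_zero_iff] at h ⊢
      linarith [norm_add_le p q]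
    · rw [Set.indicator_of_notMem h]; simpa using hp
  · exact (integrableOn_id' hP).add hqi

lemma mean_value {g : EuclideanSpace ℝ (Fin n) → ℝ} (hg : ConvexOn ℝ P g)
    (hg0 : ∀ p ∈ P, 0 ≤ g p) (hPm : MeasurableSet P) (hgi : IntegrableOn g P)
    (c : EuclideanSpace ℝ (Fin n)) {δ : ℝ} (hB : Metric.closedBall c δ ⊆ P) :
    volume.real (Metric.closedBall c δ) * g c ≤ ∫ p in P, g p := by
  set B := Metric.closedBall c δ with hBdef
  have hBm : MeasurableSet B := Metric.isClosed_closedBall.measurableSet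
  have hgB : IntegrableOn g B := hgi.mono_set hB
  have hG : Integrable (B.indicator g) := (integrable_indicator_iff hBm).2 hgB
  have hG' : Integrable (fun p => B.indicator g (2 • c - p)) := hG.comp_sub_left _
  have e1 : ∫ p, B.indicator g (2 • c - p) = ∫ p, B.indicator g p :=
    integral_sub_left_eq_self _ volume _
  have hrefl : ∀ p, p ∈ B → 2 • c - p ∈ B := by
    intro p hp
    simp only [hBdef, Metric.mem_closedBall, dist_eq_norm] at hp ⊢
    rw [show 2 • c - p - c = -(p - c) by rw [two_smul]; abel, norm_neg]
    exact hp
  have h2 : ∫ p, B.indicator (fun _ => 2 * g c) p ≤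
      ∫ p, (B.indicator g p + B.indicator g (2 • c - p)) := by
    refine integral_mono ((integrable_indicator_iff hBm).2
      (integrableOn_const measure_closedBall_lt_top.ne)) (hG.add hG') fun p => ?_
    by_cases hp : p ∈ B
    · have hp' := hrefl p hp
      simp only [Set.indicator_of_mem hp, Set.indicator_of_mem hp']
      have := hg.2 (hB hp) (hB hp') (show (0 : ℝ) ≤ 1 / 2 by norm_num)
        (show (0 : ℝ) ≤ 1 / 2 by norm_num) (by norm_num)
      have e : (1 / 2 : ℝ) • p + (1 / 2 : ℝ) • (2 • c - p) = c := by
        rw [← smul_add, add_sub_cancel, ← Nat.cast_smul_eq_nsmul ℝ, smul_smul]; norm_num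
      rw [e] at this
      simp only [smul_eq_mul] at this
      linarith
    · have hp' : 2 • c - p ∉ B := fun h => hp (by simpa using hrefl _ h)
      simp [Set.indicator_of_notMem hp, Set.indicator_of_notMem hp']
  rw [integral_add hG hG', e1, integral_indicator hBm, integral_indicator hBm,
    setIntegral_const, smul_eq_mul] at h2
  have h3 : ∫ p in B, g p ≤ ∫ p in P, g p :=
    setIntegral_mono_set hgi ((ae_restrict_iff' hPm).2 (Filter.Eventually.of_forall hg0))
      (Filter.Eventually.of_forall hB)
  linarith

lemma legendre_bdd (hP : IsCompact P) {φ : EuclideanSpace ℝ (Fin n) → ℝ} {M : ℝ}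
    (hM : ∀ x, |φ x - suppFn P x| ≤ M) {p : EuclideanSpace ℝ (Fin n)} (hp : p ∈ P)
    (x : EuclideanSpace ℝ (Fin n)) : ⟪p, x⟫_ℝ - φ x ≤ M := by
  have h1 := le_suppFn hP x hp
  rw [real_inner_comm] at h1
  linarith [(abs_le.1 (hM x)).1]

lemma le_legendre (hP : IsCompact P) {φ : EuclideanSpace ℝ (Fin n) → ℝ} {M : ℝ}
    (hM : ∀ x, |φ x - suppFn P x| ≤ M) {p : EuclideanSpace ℝ (Fin n)} (hp : p ∈ P)
    (x : EuclideanSpace ℝ (Fin n)) : ⟪p, x⟫_ℝ - φ x ≤ legendre φ p :=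
  le_ciSup (f := fun x => ⟪p, x⟫_ℝ - φ x)
    ⟨M, Set.forall_mem_range.2 (legendre_bdd hP hM hp)⟩ x

lemma legendre_convex (hP : IsCompact P) (hconv : Convex ℝ P)
    {φ : EuclideanSpace ℝ (Fin n) → ℝ} {M : ℝ}
    (hM : ∀ x, |φ x - suppFn P x| ≤ M) : ConvexOn ℝ P (legendre φ) := by
  refine ⟨hconv, fun p hp q hq s t hs ht hst => ciSup_le fun x => ?_⟩
  have h1 := mul_le_mul_of_nonneg_left (le_legendre hP hM hp x) hs
  have h2 := mul_le_mul_of_nonneg_left (le_legendre hP hM hq x) ht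
  rw [inner_add_left, real_inner_smul_left, real_inner_smul_left, smul_eq_mul, smul_eq_mul]
  have : φ x = s * φ x + t * φ x := by rw [← add_mul, hst, one_mul]
  linarith

lemma legendre_integrable (hP : IsCompact P) (hconv : Convex ℝ P)
    {φ : EuclideanSpace ℝ (Fin n) → ℝ} {M : ℝ}
    (hM : ∀ x, |φ x - suppFn P x| ≤ M) : IntegrableOn (legendre φ) P := by
  have hint : interior P =ᵐ[volume] P := interior_ae_eq_of_null_frontier (hconv.addHaar_frontier volume)
  have hmeas : AEStronglyMeasurable (legendre φ) (volume.restrict P) := by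
    rw [← Measure.restrict_congr_set hint]
    exact (legendre_convex hP hconv hM).continuousOn_interior.aestronglyMeasurable
      isOpen_interior.measurableSet
  have : IsFiniteMeasure (volume.restrict P) := ⟨by simpa using hP.measure_lt_top⟩
  refine Integrable.of_bound hmeas (max M (φ 0))
    ((ae_restrict_iff' hP.measurableSet).2 (Filter.Eventually.of_forall fun p hp => ?_))
  rw [Real.norm_eq_abs, abs_le]
  have h1 := le_legendre hP hM hp 0
  have h2 : legendre φ p ≤ M := ciSup_le (legendre_bdd hP hM hp)
  rw [inner_zero_right] at h1
  constructor
  · linarith [le_max_right M (φ 0)]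
  · exact h2.trans (le_max_left _ _)

/-- The coercivity estimate, with `A` the average of the Legendre transform. -/
lemma coercive (hP : IsCompact P) (hconv : Convex ℝ P) {δ : ℝ} (hδ : 0 < δ)
    (hV : 0 < (volume P).toReal) (b : EuclideanSpace ℝ (Fin n))
    (hb : b = ((volume P).toReal)⁻¹ • (∫ p in P, p))
    (hB : Metric.closedBall b (2 * δ) ⊆ P) :
    ∃ c > 0, ∀ φ : EuclideanSpace ℝ (Fin n) → ℝ, ∀ M, (∀ x, |φ x - suppFn P x| ≤ M) →
      ∃ x₀, ∀ x, c * ‖x - x₀‖ - ((volume P).toReal)⁻¹ * (∫ p in P, legendre φ p) - 1 ≤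
        φ x - ⟪b, x⟫_ℝ := by
  set V := (volume P).toReal with hVdef
  set m : ℝ := volume.real (Metric.closedBall b δ) with hm
  have hm0 : 0 < m :=
    ENNReal.toReal_pos (Metric.measure_closedBall_pos volume _ hδ).ne' measure_closedBall_lt_top.ne
  have hmV : m ≤ V := measureReal_mono ((Metric.closedBall_subset_closedBall (by linarith)).trans hB)
    hP.measure_lt_top.ne
  have hbP : b ∈ P := hB (Metric.mem_closedBall_self (by linarith))
  refine ⟨m / V * δ, by positivity, fun φ M hM => ?_⟩
  obtain ⟨x₀, hx₀⟩ : ∃ x₀, legendre φ b - 1 < ⟪b, x₀⟫_ℝ - φ x₀ :=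
    exists_lt_of_lt_ciSup (f := fun x => ⟪b, x⟫_ℝ - φ x) (sub_one_lt (legendre φ b))
  refine ⟨x₀, fun x => ?_⟩
  set g : EuclideanSpace ℝ (Fin n) → ℝ := fun p => legendre φ p + (φ x₀ - ⟪x₀, p⟫_ℝ) with hg
  have hLi := legendre_integrable hP hconv hM
  have hii : IntegrableOn (fun p => ⟪x₀, p⟫_ℝ) P :=
    (by fun_prop : Continuous fun p => ⟪x₀, p⟫_ℝ).continuousOn.integrableOn_compact hP
  have hci : IntegrableOn (fun _ : EuclideanSpace ℝ (Fin n) => φ x₀) P :=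
    integrableOn_const hP.measure_lt_top.ne
  have hgi : IntegrableOn g P := hLi.add (hci.sub hii)
  have hg0 : ∀ p ∈ P, 0 ≤ g p := by
    intro p hp
    have := le_legendre hP hM hp x₀
    rw [real_inner_comm] at this
    simp only [hg]; linarith
  have hgc : ConvexOn ℝ P g := by
    refine (legendre_convex hP hconv hM).add ⟨hconv, fun p _ q _ s t _ _ hst => le_of_eq ?_⟩
    simp only [smul_eq_mul, inner_add_right, real_inner_smul_right]
    linear_combination (-φ x₀) * hst
  have hgb : g b ≤ 1 := by
    simp only [hg]; rw [real_inner_comm]; linarith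
  have hgint : V⁻¹ * ∫ p in P, g p =
      V⁻¹ * (∫ p in P, legendre φ p) + φ x₀ - ⟪b, x₀⟫_ℝ := by
    have e1 : ∫ p in P, g p = (∫ p in P, legendre φ p) + (V * φ x₀ - ⟪x₀, ∫ p in P, p⟫_ℝ) := by
      refine (integral_add hLi (hci.sub hii)).trans ?_
      congr 1
      refine (integral_sub hci hii).trans ?_
      rw [setIntegral_const, integral_inner (integrableOn_id' hP)]
      rfl
    rw [e1, hb, real_inner_smul_left, real_inner_comm x₀]
    field_simp
    ring
  obtain ⟨q, hq, hqx⟩ := exists_dir (x - x₀) hδ.le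
  have hbq : b + q ∈ P := hB (by simp; linarith)
  have hmv := mean_value hgc hg0 hP.measurableSet hgi (b + q) (δ := δ) (by
    refine (Metric.closedBall_subset_closedBall' ?_).trans hB
    simp [dist_eq_norm]; linarith)
  have hmc : volume.real (Metric.closedBall (b + q) δ) = m := by
    rw [hm, measureReal_def, measureReal_def, Measure.addHaar_closedBall_center,
      Measure.addHaar_closedBall_center volume b]
  rw [hmc] at hmv
  set ε := m / V with hε
  have hε0 : 0 < ε := by positivity
  have hε1 : ε ≤ 1 := (div_le_one hV).2 hmV
  have hcomb := hgc.2 hbP hbq (show 0 ≤ 1 - ε by linarith) hε0.le (by ring)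
  have hpt : (1 - ε) • b + ε • (b + q) = b + ε • q := by
    rw [sub_smul, smul_add, one_smul]; abel
  have hmem : b + ε • q ∈ P := by
    rw [← hpt]; exact hconv hbP hbq (by linarith) hε0.le (by ring)
  rw [hpt, smul_eq_mul, smul_eq_mul] at hcomb
  have h4 : ε * g (b + q) ≤ V⁻¹ * ∫ p in P, g p := by
    rw [hε, div_eq_inv_mul, mul_assoc]
    exact mul_le_mul_of_nonneg_left hmv (by positivity)
  have h5 : (1 - ε) * g b ≤ 1 := by
    have := hg0 b hbP
    nlinarith
  have h6 := le_legendre hP hM hmem x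
  have h7 : g (b + ε • q) = legendre φ (b + ε • q) + (φ x₀ - ⟪b, x₀⟫_ℝ - ε * ⟪q, x₀⟫_ℝ) := by
    simp only [hg]
    rw [real_inner_comm, inner_add_left, real_inner_smul_left]; ring
  rw [inner_add_left, real_inner_smul_left] at h6
  rw [inner_sub_right] at hqx
  have h8 : ε * δ * ‖x - x₀‖ = ε * ⟪q, x⟫_ℝ - ε * ⟪q, x₀⟫_ℝ := by
    rw [mul_assoc, ← hqx]; ring
  linarith

lemma sufficiency (hP : IsCompact P) (hconv : Convex ℝ P) {ρ : ℝ} (hρ : 0 < ρ)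
    (hB0 : Metric.closedBall 0 ρ ⊆ P) (hV : 0 < (volume P).toReal)
    {r : ℝ} (hr : r ∈ Set.Ioo (0 : ℝ) 1) (b : EuclideanSpace ℝ (Fin n))
    (hb : b = ((volume P).toReal)⁻¹ • (∫ p in P, p))
    {δ : ℝ} (hδ : 0 < δ) (hB : Metric.closedBall b (2 * δ) ⊆ P)
    (hx : ∀ x, 0 ≤ (1 - r) * suppFn P x + r * ⟪b, x⟫_ℝ) :
    ∃ C : ℝ, ∀ φ : EuclideanSpace ℝ (Fin n) → ℝ,
        ConvexOn ℝ Set.univ φ → (∃ M : ℝ, ∀ x, |φ x - suppFn P x| ≤ M) →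
        GrFun P r φ ≤ C := by
  obtain ⟨c, hc, H⟩ := coercive hP hconv hδ hV b hb hB
  set I := ∫ x : EuclideanSpace ℝ (Fin n), Real.exp (-(r * c * ‖x‖)) with hI
  refine ⟨1 + r⁻¹ * Real.log I, fun φ hφ ⟨M, hM⟩ => ?_⟩
  obtain ⟨x₀, hx₀⟩ := H φ M hM
  unfold GrFun
  set A := ((volume P).toReal)⁻¹ * (∫ p in P, legendre φ p) with hA
  have hr0 : 0 < r := hr.1
  have hi : Integrable (fun x : EuclideanSpace ℝ (Fin n) => Real.exp (-(r * c * ‖x‖))) :=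
    integrable_exp_norm (by positivity)
  have hi2 : Integrable (fun x => Real.exp (-(r * c * ‖x - x₀‖))) := hi.comp_sub_right x₀
  have e1 : ∫ x, Real.exp (-(r * c * ‖x - x₀‖)) = I :=
    integral_sub_right_eq_self (fun x => Real.exp (-(r * c * ‖x‖))) x₀
  have hIpos : 0 < I := integral_exp_pos hi
  have hGi := integrable_Gr hP hρ hB0 hr.1 hφ hM
  have hle : ∫ x, Real.exp (-(r * φ x) - (1 - r) * suppFn P x) ≤ Real.exp (r * (A + 1)) * I := by
    rw [← e1, ← integral_const_mul]
    refine integral_mono hGi (hi2.const_mul _) fun x => ?_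
    simp only
    rw [← Real.exp_add, Real.exp_le_exp]
    have h1 := mul_le_mul_of_nonneg_left (hx₀ x) hr0.le
    have h2 := hx x
    linarith
  have hlog := Real.log_le_log (integral_exp_pos hGi) hle
  rw [Real.log_mul (Real.exp_pos _).ne' hIpos.ne', Real.log_exp] at hlog
  have := mul_le_mul_of_nonneg_left hlog (inv_nonneg.2 hr0.le)
  rw [mul_add, ← mul_assoc, inv_mul_cancel₀ hr0.ne', one_mul] at this
  rw [neg_mul]
  linarith

end helpers

/-- For `r ∈ (0,1)`, the functional `𝒢_r` is bounded above
on the set of convex `φ` with `φ - φ_P` bounded if and only if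
`(1-r)φ_P(x) + r⟨b, x⟩ ≥ 0` for all `x`, where `b` is the barycenter of `P`. -/
theorem statement17 {n : ℕ} (P : Set (EuclideanSpace ℝ (Fin n)))
    (hPcomp : IsCompact P) (hPconv : Convex ℝ P)
    (h0 : (0 : EuclideanSpace ℝ (Fin n)) ∈ interior P)
    (r : ℝ) (hr : r ∈ Set.Ioo (0 : ℝ) 1)
    (b : EuclideanSpace ℝ (Fin n))
    (hb : b = ((volume P).toReal)⁻¹ • (∫ p in P, p)) :
    (∃ C : ℝ, ∀ φ : EuclideanSpace ℝ (Fin n) → ℝ,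
        ConvexOn ℝ Set.univ φ → (∃ M : ℝ, ∀ x, |φ x - suppFn P x| ≤ M) →
        GrFun P r φ ≤ C) ↔
      (∀ x, 0 ≤ (1 - r) * suppFn P x + r * ⟪b, x⟫_ℝ) := by
  obtain ⟨ρ, hρ, hBρ⟩ : ∃ ρ > 0, Metric.closedBall 0 ρ ⊆ P :=
    Metric.nhds_basis_closedBall.mem_iff.1 (mem_interior_iff_mem_nhds.1 h0)
  have hV : 0 < (volume P).toReal :=
    ENNReal.toReal_pos ((Metric.measure_closedBall_pos volume 0 hρ).trans_le
      (measure_mono hBρ)).ne' hPcomp.measure_lt_top.ne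
  have hne : P.Nonempty := ⟨0, interior_subset h0⟩
  have hr0 := hr.1
  constructor
  · rintro ⟨C, hC⟩ x
    by_contra! hneg
    set D := (1 - r) * suppFn P x + r * ⟪b, x⟫_ℝ with hD
    set L := Real.log (∫ x, Real.exp (-(suppFn P x))) with hL
    have key : ∀ t : ℝ, 0 ≤ t → L - t * D ≤ r * C := by
      intro t ht
      have h1 := necessity hPcomp hρ hBρ hr b hb C hC (t • x)
      have h2 := mul_le_mul_of_nonneg_left h1 hr0.le
      rw [mul_add, ← mul_assoc, mul_inv_cancel₀ hr0.ne', one_mul, real_inner_smul_right] at h2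
      have h3 := mul_le_mul_of_nonneg_left (suppFn_smul_le hPcomp hne x ht)
        (sub_nonneg.2 hr.2.le)
      rw [hD]
      linarith
    have h1 := key ((|r * C - L| + 1) / (-D)) (by
      have : 0 < -D := by linarith
      positivity)
    have h2 : (|r * C - L| + 1) / (-D) * D = -(|r * C - L| + 1) := by
      rw [div_neg, neg_mul, div_mul_cancel₀ _ hneg.ne]
    rw [h2] at h1
    linarith [le_abs_self (r * C - L)]
  · intro hx
    obtain ⟨δ, hδ, hBδ⟩ := bary_ball hPcomp hPconv (half_pos hρ)
      (by rwa [mul_div_cancel₀ _ two_ne_zero]) hV b hb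
    exact sufficiency hPcomp hPconv hρ hBρ hV hr b hb (half_pos hδ)
      (by rwa [mul_div_cancel₀ _ two_ne_zero]) hx
end

section
/- Let P ⊆ ℝⁿ be a convex body containing 0, and let u : P → ℝ be a continuous convex function with u(0) = 0. Then the function t ↦ t^{−(n+1)} ∫_{tP} u(p) dp is monotone nondecreasing on (0,1], i.e. for all 0 < s ≤ t ≤ 1 one has s^{−(n+1)} ∫_{sP} u dp ≤ t^{−(n+1)} ∫_{tP} u dp; moreover, if u is the restriction to P of a linear function, then this function of t is constant on (0,1]. -/
open scoped InnerProductSpace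
open MeasureTheory
open scoped Pointwise

/-- For a continuous convex function `u` on a convex body
`P ∋ 0` with `u(0) = 0`, the function `t ↦ t^{-(n+1)} ∫_{tP} u dp` is monotone
nondecreasing on `(0,1]`, and it is constant when `u` is the restriction of a
linear function. -/
theorem statement18 {n : ℕ} (P : Set (EuclideanSpace ℝ (Fin n)))
    (hPcomp : IsCompact P) (hPconv : Convex ℝ P)
    (hPint : (interior P).Nonempty)
    (h0 : (0 : EuclideanSpace ℝ (Fin n)) ∈ P)
    (u : EuclideanSpace ℝ (Fin n) → ℝ)
    (hcont : ContinuousOn u P) (hconv : ConvexOn ℝ P u) (hu0 : u 0 = 0) :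
    (∀ s t : ℝ, 0 < s → s ≤ t → t ≤ 1 →
      (∫ p in s • P, u p) / s ^ (n + 1) ≤ (∫ p in t • P, u p) / t ^ (n + 1)) ∧
    (∀ l : EuclideanSpace ℝ (Fin n) →ₗ[ℝ] ℝ, (∀ p ∈ P, u p = l p) →
      ∀ s t : ℝ, 0 < s → s ≤ 1 → 0 < t → t ≤ 1 →
        (∫ p in s • P, u p) / s ^ (n + 1) = (∫ p in t • P, u p) / t ^ (n + 1)) := by
  have key : ∀ s : ℝ, 0 < s →
      (∫ p in s • P, u p) / s ^ (n + 1) = ∫ p in P, u (s • p) / s := by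
    intro s hs
    have h := Measure.setIntegral_comp_smul_of_pos volume u P hs
    rw [finrank_euclideanSpace_fin, smul_eq_mul] at h
    rw [integral_div, h, pow_succ]
    field_simp
  have hmem : ∀ s : ℝ, 0 < s → s ≤ 1 → ∀ p ∈ P, s • p ∈ P := by
    intro s hs hs1 p hp
    exact hPconv.smul_mem_of_zero_mem h0 hp ⟨hs.le, hs1⟩
  have hint : ∀ s : ℝ, 0 < s → s ≤ 1 → IntegrableOn (fun p => u (s • p) / s) P := by
    intro s hs hs1
    exact ContinuousOn.integrableOn_compact hPcomp
      ((hcont.comp (continuous_const_smul s).continuousOn (hmem s hs hs1)).div_const s)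
  refine ⟨?_, ?_⟩
  · intro s t hs hst ht
    have ht0 : 0 < t := hs.trans_le hst
    rw [key s hs, key t ht0]
    refine setIntegral_mono_on (hint s hs (hst.trans ht)) (hint t ht0 ht)
      hPcomp.measurableSet ?_
    intro p hp
    have hr : s / t ≤ 1 := (div_le_one ht0).2 hst
    have hr0 : 0 ≤ s / t := by positivity
    have h := hconv.2 (hmem t ht0 ht p hp) h0 hr0 (sub_nonneg.2 hr) (by ring)
    rw [smul_zero, add_zero, hu0, smul_zero, add_zero, smul_smul,
      div_mul_cancel₀ _ ht0.ne', smul_eq_mul] at h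
    rw [div_le_iff₀ hs]
    calc u (s • p) ≤ s / t * u (t • p) := h
      _ = u (t • p) / t * s := by ring
  · intro l hl s t hs hs1 ht ht1
    rw [key s hs, key t ht]
    refine setIntegral_congr_fun hPcomp.measurableSet ?_
    intro p hp
    simp only
    rw [hl _ (hmem s hs hs1 p hp), hl _ (hmem t ht ht1 p hp), map_smul, map_smul,
      smul_eq_mul, smul_eq_mul, mul_div_cancel_left₀ _ hs.ne', mul_div_cancel_left₀ _ ht.ne']
end
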